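/- arXiv:2401.07536 — 3 statements merged into one kernel-verified Lean document; each statement's English description precedes it below -/
import Mathlib

section
/- Let Y_+ additionally be pointed, let y_0 be a minimal point of (P(0)) with y_0 ∈ F(x_0) for some feasible x_0, and let L_{y_0} be the Lagrange process of (P(0)) at y_0. Assume that the set Y_+ ∩ S_Y is compact, where S_Y is the unit sphere of Y, and that L_{y_0} is a Lagrange multiplier of (P(0)) at y_0. Then Min(DV(0,y_0)(z)) = Min(D(V+Y_+)(0,y_0)(z)) for every z ∈ Z, where DV(0,y_0) and D(V+Y_+)(0,y_0) are the contingent derivatives of V and V+Y_+ at (0,y_0). -/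
open Pointwise Filter Topology

namespace Paper

section Defs

variable {E : Type*} [NormedAddCommGroup E] [NormedSpace ℝ E]

/-- The cone hull of a set: all nonnegative multiples of its elements. -/
def coneHull (A : Set E) : Set E := {x | ∃ r : ℝ, 0 ≤ r ∧ ∃ a ∈ A, x = r • a}

/-- A cone: a nonempty set closed under multiplication by nonnegative scalars. -/
def IsCone (K : Set E) : Prop := K.Nonempty ∧ ∀ r : ℝ, 0 ≤ r → ∀ x ∈ K, r • x ∈ K

/-- A pointed cone: `K ∩ (-K) = {0}`. -/
def IsPointed (K : Set E) : Prop := K ∩ (-K) = {0}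

/-- A proper cone: `{0} ≠ K ≠ E`. -/
def IsProper (K : Set E) : Prop := K ≠ {0} ∧ K ≠ Set.univ

/-- A solid cone: nonempty interior. -/
def IsSolid (K : Set E) : Prop := (interior K).Nonempty

/-- The contingent cone to `A` at `w`. -/
def contingentCone (A : Set E) (w : E) : Set E :=
  {v | Filter.liminf (fun h : ℝ => Metric.infDist (w + h • v) A / h) (𝓝[>] (0:ℝ)) = 0}

end Defs

section SV

variable {X Y Z : Type*}
  [NormedAddCommGroup X] [NormedSpace ℝ X]
  [NormedAddCommGroup Y] [NormedSpace ℝ Y]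
  [NormedAddCommGroup Z] [NormedSpace ℝ Z]

/-- The graph of a set-valued map. -/
def graph (Δ : Z → Set Y) : Set (Z × Y) := {p | p.2 ∈ Δ p.1}

/-- The image of a set by a set-valued map. -/
def imageSet (Δ : Z → Set Y) (A : Set Z) : Set Y := ⋃ w ∈ A, Δ w

/-- The feasible set map `S(z) = {x ∈ Ω : G(x) ∩ (z - Z₊) ≠ ∅}`. -/
def Smap (Ω : Set X) (G : X → Set Z) (Zp : Set Z) (z : Z) : Set X :=
  {x | x ∈ Ω ∧ (G x ∩ ({z} - Zp)).Nonempty}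

/-- The value map `V(z) = F(S(z))`. -/
def Vmap (Ω : Set X) (F : X → Set Y) (G : X → Set Z) (Zp : Set Z) (z : Z) : Set Y :=
  ⋃ x ∈ Smap Ω G Zp z, F x

/-- The map `(V + Y₊)(z) = V(z) + Y₊`. -/
def VplusMap (Ω : Set X) (F : X → Set Y) (G : X → Set Z) (Zp : Set Z) (Yp : Set Y)
    (z : Z) : Set Y :=
  Vmap Ω F G Zp z + Yp

/-- The graph of `V + Y₊`. -/
def GraphVplus (Ω : Set X) (F : X → Set Y) (G : X → Set Z) (Zp : Set Z) (Yp : Set Y) :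
    Set (Z × Y) :=
  {p : Z × Y | p.2 ∈ Vmap Ω F G Zp p.1 + Yp}

/-- Minimal points of a set `A` with respect to the cone `Yp`. -/
def MinSet (Yp : Set Y) (A : Set Y) : Set Y :=
  {a ∈ A | A ∩ ({a} - Yp) ⊆ {a} + Yp}

/-- The marginal map `M(z) = Min(V(z))`. -/
def Mmap (Ω : Set X) (F : X → Set Y) (G : X → Set Z) (Zp : Set Z) (Yp : Set Y)
    (z : Z) : Set Y :=
  MinSet Yp (Vmap Ω F G Zp z)

/-- `y₀` is a nondominated point of `(P(0))`. -/
def Nondominated (Ω : Set X) (F : X → Set Y) (G : X → Set Z) (Zp : Set Z) (Yp : Set Y)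
    (y0 : Y) : Prop :=
  y0 ∈ closure (Vmap Ω F G Zp 0) ∧
    Vmap Ω F G Zp 0 ∩ ({y0} - Yp) ⊆ {y0} + Yp

/-- `y₀` is a minimal point of `(P(0))`. -/
def MinimalPoint (Ω : Set X) (F : X → Set Y) (G : X → Set Z) (Zp : Set Z) (Yp : Set Y)
    (y0 : Y) : Prop :=
  y0 ∈ Vmap Ω F G Zp 0 ∧
    Vmap Ω F G Zp 0 ∩ ({y0} - Yp) ⊆ {y0} + Yp

/-- The set `S_{Y₊}(y₀)` of separating pairs of continuous linear functionals. -/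
def Sdual (Ω : Set X) (F : X → Set Y) (G : X → Set Z) (Zp : Set Z) (Yp : Set Y) (y0 : Y) :
    Set ((Z →L[ℝ] ℝ) × (Y →L[ℝ] ℝ)) :=
  {p | (∀ z' ∈ -Zp, ∀ y' ∈ ({y0} : Set Y) - Yp, p.1 z' + p.2 y' ≤ p.2 y0) ∧
       (∀ q ∈ GraphVplus Ω F G Zp Yp, p.2 y0 ≤ p.1 q.1 + p.2 q.2)}

/-- `P(Z,Y)`: closed convex processes with full domain. -/
def PZY : Set (Z → Set Y) :=
  {Δ | IsClosed (graph Δ) ∧ Convex ℝ (graph Δ) ∧ IsCone (graph Δ) ∧ ∀ z, (Δ z).Nonempty}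

/-- The set `Λ_{(z*,y*)}` of processes associated to `(z*,y*)`. -/
def Lambda (zs : Z →L[ℝ] ℝ) (ys : Y →L[ℝ] ℝ) : Set (Z → Set Y) :=
  {Δ | Δ ∈ PZY ∧ graph Δ \ {0} ⊆ {p : Z × Y | 0 < -(zs p.1) + ys p.2}}

/-- The set `Γ_{y₀}` of processes associated to `y₀`. -/
def Gamma (Ω : Set X) (F : X → Set Y) (G : X → Set Z) (Zp : Set Z) (Yp : Set Y) (y0 : Y) :
    Set (Z → Set Y) :=
  ⋃ p ∈ Sdual Ω F G Zp Yp y0 \ {0}, Lambda p.1 p.2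

/-- The Slater constraint qualification. -/
def Slater (Ω : Set X) (F : X → Set Y) (G : X → Set Z) (Zp : Set Z) : Prop :=
  ∃ x1 ∈ Ω, (F x1).Nonempty ∧ (G x1 ∩ (-interior Zp)).Nonempty

/-- `Ψ(Δ) = ∪_{x∈Ω}(F(x) + Δ(G(x)+Z₊))`. -/
def Umap (Ω : Set X) (F : X → Set Y) (G : X → Set Z) (Zp : Set Z) (Δ : Z → Set Y) : Set Y :=
  ⋃ x ∈ Ω, (F x + imageSet Δ (G x + Zp))

/-- The dual map `Φ(Δ)`: nondominated points of the closure of `Ψ(Δ)`. -/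
def Phi (Ω : Set X) (F : X → Set Y) (G : X → Set Z) (Zp : Set Z) (Yp : Set Y)
    (Δ : Z → Set Y) : Set Y :=
  {y ∈ closure (Umap Ω F G Zp Δ) | Umap Ω F G Zp Δ ∩ ({y} - Yp) ⊆ {y} + Yp}

/-- `Δ` is a Lagrange multiplier of `(P(0))` at `y₀`. -/
def LagrangeMultiplier (Ω : Set X) (F : X → Set Y) (G : X → Set Z) (Zp : Set Z) (Yp : Set Y)
    (Δ : Z → Set Y) (y0 : Y) : Prop :=
  y0 ∈ closure (Umap Ω F G Zp Δ) ∧ Umap Ω F G Zp Δ ∩ ({y0} - Yp) ⊆ {y0} + Yp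

/-- The graph of the Lagrange process of `(P(0))` at `y₀`. -/
def GraphLagrange (Ω : Set X) (F : X → Set Y) (G : X → Set Z) (Zp : Set Z) (Yp : Set Y)
    (y0 : Y) : Set (Z × Y) :=
  {p : Z × Y | ∀ q ∈ Sdual Ω F G Zp Yp y0, q.1 p.1 ≤ q.2 p.2}

/-- The Lagrange process of `(P(0))` at `y₀`, as a set-valued map. -/
def Lagrange (Ω : Set X) (F : X → Set Y) (G : X → Set Z) (Zp : Set Z) (Yp : Set Y) (y0 : Y)
    (z : Z) : Set Y :=
  {y | (z, y) ∈ GraphLagrange Ω F G Zp Yp y0}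

/-- The contingent derivative of a set-valued map `H` at `(z₀, y₀)`. -/
def contingentDeriv (H : Z → Set Y) (z0 : Z) (y0 : Y) (z : Z) : Set Y :=
  {y | (z, y) ∈ contingentCone (graph H) (z0, y0)}

/-- The S-derivative (Shi derivative) of a set-valued map `H` at `(z₀, y₀)`. -/
def Sderiv (H : Z → Set Y) (z0 : Z) (y0 : Y) (z : Z) : Set Y :=
  {y | ∃ (h : ℕ → ℝ) (zn : ℕ → Z) (yn : ℕ → Y),
    (∀ n, 0 < h n) ∧ Filter.Tendsto zn Filter.atTop (𝓝 z) ∧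
    Filter.Tendsto yn Filter.atTop (𝓝 y) ∧
    Filter.Tendsto (fun n => h n • zn n) Filter.atTop (𝓝 (0:Z)) ∧
    ∀ n, y0 + h n • yn n ∈ H (z0 + h n • zn n)}

/-- The standing assumptions of the paper: `Y₊`, `Z₊` proper solid convex cones, `Ω` nonempty
convex, `F` is `Y₊`-convex and `G` is `Z₊`-convex. -/
def StandingHyp (Ω : Set X) (F : X → Set Y) (G : X → Set Z) (Zp : Set Z) (Yp : Set Y) : Prop :=
  IsCone Yp ∧ IsProper Yp ∧ IsSolid Yp ∧ Convex ℝ Yp ∧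
  IsCone Zp ∧ IsProper Zp ∧ IsSolid Zp ∧ Convex ℝ Zp ∧
  Ω.Nonempty ∧ Convex ℝ Ω ∧
  Convex ℝ {p : X × Y | p.1 ∈ Ω ∧ p.2 ∈ F p.1 + Yp} ∧
  Convex ℝ {p : X × Z | p.1 ∈ Ω ∧ p.2 ∈ G p.1 + Zp}

end SV

variable {X Y Z : Type*}
  [NormedAddCommGroup X] [NormedSpace ℝ X]
  [NormedAddCommGroup Y] [NormedSpace ℝ Y]
  [NormedAddCommGroup Z] [NormedSpace ℝ Z]

theorem contingent_iff_seq {E : Type*} [NormedAddCommGroup E] [NormedSpace ℝ E]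
    (A : Set E) (w : E) (hw : w ∈ A) (v : E) :
    v ∈ contingentCone A w ↔ ∃ (h : ℕ → ℝ) (u : ℕ → E), (∀ n, 0 < h n) ∧
      Tendsto h atTop (𝓝 0) ∧ Tendsto u atTop (𝓝 v) ∧ ∀ n, w + h n • u n ∈ A := by
  have hpos : ∀ᶠ h in 𝓝[>] (0:ℝ), 0 < h := eventually_mem_nhdsWithin
  have hnn : ∀ᶠ h in 𝓝[>] (0:ℝ), 0 ≤ Metric.infDist (w + h • v) A / h := by
    filter_upwards [hpos] with h hh
    exact div_nonneg Metric.infDist_nonneg hh.le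
  have hbd : IsBoundedUnder (· ≥ ·) (𝓝[>] (0:ℝ))
      (fun h : ℝ => Metric.infDist (w + h • v) A / h) := ⟨0, by simpa using hnn⟩
  have hle : ∀ᶠ h in 𝓝[>] (0:ℝ), Metric.infDist (w + h • v) A / h ≤ ‖v‖ := by
    filter_upwards [hpos] with h hh
    rw [div_le_iff₀ hh]
    refine (Metric.infDist_le_dist_of_mem hw).trans ?_
    rw [dist_eq_norm, add_sub_cancel_left, norm_smul, Real.norm_of_nonneg hh.le, mul_comm]
  have hcb : IsCoboundedUnder (· ≥ ·) (𝓝[>] (0:ℝ))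
      (fun h : ℝ => Metric.infDist (w + h • v) A / h) :=
    IsCoboundedUnder.of_frequently_le hle.frequently
  constructor
  · intro hv
    have hv' : Filter.liminf (fun h : ℝ => Metric.infDist (w + h • v) A / h) (𝓝[>] (0:ℝ)) = 0 := hv
    have key : ∀ n : ℕ, ∃ (h : ℝ) (u : E), 0 < h ∧ h < 1 / ((n:ℝ) + 1) ∧
        dist u v < 1 / ((n:ℝ) + 1) ∧ w + h • u ∈ A := by
      intro n
      have he : (0:ℝ) < 1 / ((n:ℝ) + 1) := Nat.one_div_pos_of_nat
      have hf : ∃ᶠ h in 𝓝[>] (0:ℝ), Metric.infDist (w + h • v) A / h < 1 / ((n:ℝ) + 1) :=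
        frequently_lt_of_liminf_lt hcb (by rw [hv']; exact he)
      have hs : ∀ᶠ h in 𝓝[>] (0:ℝ), h < 1 / ((n:ℝ) + 1) :=
        mem_nhdsWithin_of_mem_nhds (Iio_mem_nhds he)
      obtain ⟨h, ⟨h1, h2⟩, h3⟩ := (hf.and_eventually hs).and_eventually hpos |>.exists
      rw [div_lt_iff₀ h3] at h1
      obtain ⟨a, ha, hd⟩ := (Metric.infDist_lt_iff ⟨w, hw⟩).1 h1
      refine ⟨h, h⁻¹ • (a - w), h3, h2, ?_, ?_⟩
      · have e : h⁻¹ • (a - w) - v = h⁻¹ • (a - (w + h • v)) := by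
          rw [← sub_sub, smul_sub h⁻¹ (a - w), smul_smul, inv_mul_cancel₀ h3.ne', one_smul]
        rw [dist_eq_norm, e, norm_smul, norm_inv, Real.norm_of_nonneg h3.le, ← dist_eq_norm,
          dist_comm, inv_mul_lt_iff₀ h3, mul_comm]
        exact hd
      · rw [smul_smul, mul_inv_cancel₀ h3.ne', one_smul]
        simpa using ha
    choose h u h1 h2 h3 h4 using key
    refine ⟨h, u, h1, ?_, ?_, h4⟩
    · exact squeeze_zero (fun n => (h1 n).le) (fun n => (h2 n).le)
        tendsto_one_div_add_atTop_nhds_zero_nat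
    · rw [tendsto_iff_dist_tendsto_zero]
      exact squeeze_zero (fun n => dist_nonneg) (fun n => (h3 n).le)
        tendsto_one_div_add_atTop_nhds_zero_nat
  · rintro ⟨h, u, h1, h2, h3, h4⟩
    have ht : Tendsto h atTop (𝓝[>] 0) :=
      tendsto_nhdsWithin_iff.2 ⟨h2, Eventually.of_forall h1⟩
    refine le_antisymm (le_of_forall_pos_le_add fun ε hε => ?_) (le_liminf_of_le hcb hnn)
    rw [zero_add]
    refine liminf_le_of_frequently_le ?_ hbd
    refine ht.frequently (Eventually.frequently ?_)
    filter_upwards [(tendsto_iff_dist_tendsto_zero.1 h3).eventually (Iio_mem_nhds hε)] with n hn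
    rw [div_le_iff₀ (h1 n)]
    refine (Metric.infDist_le_dist_of_mem (h4 n)).trans ?_
    rw [dist_add_left, dist_smul₀, Real.norm_of_nonneg (h1 n).le, dist_comm, mul_comm]
    exact mul_le_mul_of_nonneg_right (le_of_lt hn) (h1 n).le

theorem minSet_add_eq {Y : Type*} [NormedAddCommGroup Y] [NormedSpace ℝ Y] (Yp A B : Set Y)
    (h0 : (0:Y) ∈ Yp) (hadd : ∀ a ∈ Yp, ∀ b ∈ Yp, a + b ∈ Yp)
    (hpt : ∀ a ∈ Yp, -a ∈ Yp → a = 0) (hAB : A ⊆ B)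
    (hBA : ∀ b ∈ B, ∃ k ∈ Yp, b - k ∈ A) :
    MinSet Yp A = MinSet Yp B := by
  have hm : ∀ a b : Y, b ∈ ({a} : Set Y) - Yp ↔ a - b ∈ Yp := by
    intro a b
    rw [Set.mem_sub]
    constructor
    · rintro ⟨x, rfl, k, hk, rfl⟩
      simpa using hk
    · intro h
      exact ⟨a, rfl, a - b, h, by simp⟩
  have hp : ∀ a b : Y, b ∈ ({a} : Set Y) + Yp ↔ b - a ∈ Yp := by
    intro a b
    rw [Set.mem_add]
    constructor
    · rintro ⟨x, rfl, k, hk, rfl⟩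
      simpa using hk
    · intro h
      exact ⟨a, rfl, b - a, h, by simp⟩
  ext a
  constructor
  · rintro ⟨ha, hmin⟩
    refine ⟨hAB ha, ?_⟩
    rintro b ⟨hb, hba⟩
    rw [hm] at hba
    rw [hp]
    obtain ⟨k, hk, hbk⟩ := hBA b hb
    have h1 : a - (b - k) ∈ Yp := by
      have := hadd _ hba _ hk
      rwa [show a - b + k = a - (b - k) by abel] at this
    have h2 := hmin ⟨hbk, (hm _ _).2 h1⟩
    rw [hp] at h2
    have h3 := hpt _ h1 (by simpa using h2)
    have : b - a = k := by
      have h4 : a = b - k := sub_eq_zero.1 h3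
      rw [h4]; abel
    rw [this]; exact hk
  · rintro ⟨ha, hmin⟩
    obtain ⟨k, hk, hak⟩ := hBA a ha
    have h2 := hmin ⟨hAB hak, (hm _ _).2 (by simpa using hk)⟩
    rw [hp] at h2
    have h3 := hpt k hk (by simpa using h2)
    subst h3
    refine ⟨by simpa using hak, fun b hb => hmin ⟨hAB hb.1, hb.2⟩⟩

theorem stmt_17 (Ω : Set X) (F : X → Set Y) (G : X → Set Z) (Zp : Set Z) (Yp : Set Y)
    (hSt : StandingHyp Ω F G Zp Yp)
    (hYpPointed : IsPointed Yp)
    (y0 : Y) (hy0 : MinimalPoint Ω F G Zp Yp y0)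
    (x0 : X) (hx0Ω : x0 ∈ Ω) (hx0feas : (G x0 ∩ (-Zp)).Nonempty) (hy0F : y0 ∈ F x0)
    (hcpt : IsCompact (Yp ∩ Metric.sphere (0:Y) 1))
    (hLM : LagrangeMultiplier Ω F G Zp Yp (Lagrange Ω F G Zp Yp y0) y0) :
    ∀ z : Z, MinSet Yp (contingentDeriv (Vmap Ω F G Zp) 0 y0 z) =
      MinSet Yp (contingentDeriv (VplusMap Ω F G Zp Yp) 0 y0 z) := by
  intro z
  obtain ⟨⟨hne, hcone⟩, -, -, hconv, -⟩ := hSt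
  have h0 : (0:Y) ∈ Yp := by
    obtain ⟨x, hx⟩ := hne
    simpa using hcone 0 le_rfl x hx
  have hadd : ∀ a ∈ Yp, ∀ b ∈ Yp, a + b ∈ Yp := by
    intro a ha b hb
    have := hcone 2 (by norm_num) _ (hconv ha hb (a := 1/2) (b := 1/2) (by norm_num)
      (by norm_num) (by norm_num))
    rw [smul_add, smul_smul, smul_smul] at this
    norm_num at this
    exact this
  have hpt : ∀ a ∈ Yp, -a ∈ Yp → a = 0 := by
    intro a ha hna
    have : a ∈ Yp ∩ (-Yp) := ⟨ha, by simpa using hna⟩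
    rw [hYpPointed] at this
    exact this
  -- no nonzero direction of `Yp` is annihilated
  have hno : ∀ k ∈ Yp, (∀ q ∈ Sdual Ω F G Zp Yp y0, q.2 k ≤ 0) → k = 0 := by
    intro k hk hq
    obtain ⟨g, hg, hgZ⟩ := hx0feas
    have hL : -k ∈ Lagrange Ω F G Zp Yp y0 0 := by
      intro q hqS
      have := hq q hqS
      simp only [map_zero, map_neg]
      linarith
    have hU : y0 + -k ∈ Umap Ω F G Zp (Lagrange Ω F G Zp Yp y0) := by
      refine Set.mem_biUnion hx0Ω (Set.add_mem_add hy0F ?_)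
      refine Set.mem_biUnion (x := (0:Z)) ?_ hL
      exact Set.mem_add.2 ⟨g, hg, -g, hgZ, by simp⟩
    have h1 := hLM.2 ⟨hU, Set.mem_sub.2 ⟨y0, rfl, k, hk, by abel⟩⟩
    obtain ⟨y, hy, k', hk', he⟩ := Set.mem_add.1 h1
    rw [Set.mem_singleton_iff] at hy
    subst hy
    have : k' = -k := add_left_cancel he
    exact hpt k hk (this ▸ hk')
  have hgV : ((0:Z), y0) ∈ graph (Vmap Ω F G Zp) := hy0.1
  have hsub : graph (Vmap Ω F G Zp) ⊆ graph (VplusMap Ω F G Zp Yp) := by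
    rintro ⟨a, b⟩ hab
    exact Set.mem_add.2 ⟨b, hab, 0, h0, add_zero b⟩
  have hgVp := hsub hgV
  refine minSet_add_eq Yp _ _ h0 hadd hpt ?_ ?_
  · intro y hy
    obtain ⟨h, u, h1, h2, h3, h4⟩ := (contingent_iff_seq _ _ hgV _).1 hy
    exact (contingent_iff_seq _ _ hgVp _).2 ⟨h, u, h1, h2, h3, fun n => hsub (h4 n)⟩
  · intro y hy
    obtain ⟨h, u, h1, h2, h3, h4⟩ := (contingent_iff_seq _ _ hgVp _).1 hy
    have h5 : ∀ n, ∃ k ∈ Yp, y0 + h n • ((u n).2 - k) ∈ Vmap Ω F G Zp (h n • (u n).1) := by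
      intro n
      obtain ⟨v, hv, k, hk, he⟩ := Set.mem_add.1 (h4 n)
      refine ⟨(h n)⁻¹ • k, hcone _ (inv_nonneg.2 (h1 n).le) k hk, ?_⟩
      rw [smul_sub, smul_smul, mul_inv_cancel₀ (h1 n).ne', one_smul]
      have he' : v + k = y0 + h n • (u n).2 := he
      have : y0 + (h n • (u n).2 - k) = v := by
        rw [← add_sub_assoc, ← he']; abel
      rw [this]
      simpa using hv
    choose κ hκ hV using h5
    have hu1 : Tendsto (fun n => (u n).1) atTop (𝓝 z) := (continuous_fst.tendsto _).comp h3
    have hu2 : Tendsto (fun n => (u n).2) atTop (𝓝 y) := (continuous_snd.tendsto _).comp h3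
    by_cases hT : Tendsto (fun n => ‖κ n‖) atTop atTop
    · exfalso
      have hi : Tendsto (fun n => ‖κ n‖⁻¹) atTop (𝓝 0) := hT.inv_tendsto_atTop
      have hev : ∀ᶠ n in atTop, ‖κ n‖⁻¹ • κ n ∈ Yp ∩ Metric.sphere (0:Y) 1 := by
        filter_upwards [hT.eventually_gt_atTop 0] with n hn
        refine ⟨hcone _ (inv_nonneg.2 hn.le) _ (hκ n), ?_⟩
        rw [mem_sphere_zero_iff_norm, norm_smul, norm_inv, norm_norm, inv_mul_cancel₀ hn.ne']
      obtain ⟨e, he, φ, hφ, hφe⟩ := hcpt.tendsto_subseq' hev.frequently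
      have hz : e = 0 := by
        refine hno e he.1 fun q hq => ?_
        have hqn : ∀ n, q.2 (‖κ n‖⁻¹ • κ n) ≤ ‖κ n‖⁻¹ * (q.1 (u n).1 + q.2 (u n).2) := by
          intro n
          have := hq.2 (_, _) (hsub (show (h n • (u n).1, y0 + h n • ((u n).2 - κ n)) ∈
            graph (Vmap Ω F G Zp) from hV n))
          simp only [map_add, map_smul, map_sub, smul_eq_mul] at this
          have h6 : 0 ≤ h n * (q.1 (u n).1 + q.2 (u n).2 - q.2 (κ n)) := by linarith
          have h7 := nonneg_of_mul_nonneg_right h6 (h1 n)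
          rw [map_smul, smul_eq_mul]
          exact mul_le_mul_of_nonneg_left (by linarith) (inv_nonneg.2 (norm_nonneg _))
        have hl1 : Tendsto (fun n => q.2 (‖κ (φ n)‖⁻¹ • κ (φ n))) atTop (𝓝 (q.2 e)) :=
          (q.2.continuous.tendsto _).comp hφe
        have hl2 : Tendsto (fun n => ‖κ n‖⁻¹ * (q.1 (u n).1 + q.2 (u n).2)) atTop (𝓝 0) := by
          have := hi.mul (((q.1.continuous.tendsto _).comp hu1).add
            ((q.2.continuous.tendsto _).comp hu2))
          simpa using this
        exact le_of_tendsto_of_tendsto' hl1 (hl2.comp hφ.tendsto_atTop) fun n => hqn (φ n)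
      have := he.2
      rw [hz] at this
      simp at this
    · rw [tendsto_atTop] at hT
      push Not at hT
      obtain ⟨R, hR⟩ := hT
      let K : Set Y := insert 0 ((fun p : ℝ × Y => p.1 • p.2) ''
        (Set.Icc 0 R ×ˢ (Yp ∩ Metric.sphere (0:Y) 1)))
      have hK : IsCompact K :=
        ((isCompact_Icc.prod hcpt).image (by fun_prop)).insert 0
      have hKY : K ⊆ Yp := by
        rintro _ (rfl | ⟨p, ⟨hp1, hp2⟩, rfl⟩)
        · exact h0
        · exact hcone _ hp1.1 _ hp2.1
      have hfK : ∃ᶠ n in atTop, κ n ∈ K := by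
        refine hR.mono fun n hn => ?_
        by_cases hk0 : κ n = 0
        · exact Or.inl hk0
        · have hpos : 0 < ‖κ n‖ := norm_pos_iff.2 hk0
          refine Or.inr ⟨(‖κ n‖, ‖κ n‖⁻¹ • κ n), ⟨⟨hpos.le, hn.le⟩,
            hcone _ (inv_nonneg.2 hpos.le) _ (hκ n), ?_⟩, ?_⟩
          · rw [mem_sphere_zero_iff_norm, norm_smul, norm_inv, norm_norm, inv_mul_cancel₀ hpos.ne']
          · simp only [smul_smul]
            rw [mul_inv_cancel₀ hpos.ne', one_smul]
      obtain ⟨k, hk, φ, hφ, hφk⟩ := hK.tendsto_subseq' hfK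
      refine ⟨k, hKY hk, (contingent_iff_seq _ _ hgV _).2
        ⟨h ∘ φ, fun n => ((u (φ n)).1, (u (φ n)).2 - κ (φ n)), fun n => h1 _,
          h2.comp hφ.tendsto_atTop, ?_, ?_⟩⟩
      · exact (hu1.comp hφ.tendsto_atTop).prodMk_nhds ((hu2.comp hφ.tendsto_atTop).sub hφk)
      · intro n
        have := hV (φ n)
        simpa [graph] using this

end Paper
end

section
/- Let Y_+ additionally be pointed, let y_0 ∈ V(0) be a minimal point of (P(0)) with y_0 ∈ F(x_0) for some feasible x_0, and let L_{y_0} be the Lagrange process of (P(0)) at y_0. Assume: the Slater condition; the set Y_+ ∩ S_Y is compact (S_Y the unit sphere of Y); and V is Y_+-dominated by M near 0, i.e. there is a neighbourhood V_0 of 0 in Z with V(z) ⊆ M(z)+Y_+ for every z ∈ V_0, where M(z) := Min(V(z)). If at least one of the following holds: (a) Graph(L_{y_0}) has a bounded base, (b) Y_+ ∖ {0} is open, (c) y_0 is a Henig global properly efficient point of V(0), or (d) y_0 is a Henig properly efficient point of V(0), then Min(DM(0,y_0)(z)) = Min(L_{y_0}(−z)) for every z ∈ Z, where DM(0,y_0)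 is the contingent derivative of the marginal map M at (0,y_0). -/
open Pointwise Filter Topology

namespace Paper

variable {X Y Z : Type*}
  [NormedAddCommGroup X] [NormedSpace ℝ X]
  [NormedAddCommGroup Y] [NormedSpace ℝ Y]
  [NormedAddCommGroup Z] [NormedSpace ℝ Z]


section Helpers

variable {E : Type*} [NormedAddCommGroup E] [NormedSpace ℝ E]

lemma coneHull_smul {A : Set E} {p : E} (hp : p ∈ coneHull A) {r : ℝ} (hr : 0 ≤ r) :
    r • p ∈ coneHull A := by
  obtain ⟨s, hs, a, ha, rfl⟩ := hp
  exact ⟨r * s, mul_nonneg hr hs, a, ha, by rw [smul_smul]⟩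

lemma subset_coneHull {A : Set E} {p : E} (hp : p ∈ A) : p ∈ coneHull A :=
  ⟨1, zero_le_one, p, hp, by simp⟩

lemma coneHull_add {A : Set E} (hA : Convex ℝ A) {p q : E} (hp : p ∈ coneHull A)
    (hq : q ∈ coneHull A) : p + q ∈ coneHull A := by
  obtain ⟨s, hs, a, ha, rfl⟩ := hp
  obtain ⟨t, ht, b, hb, rfl⟩ := hq
  rcases (add_nonneg hs ht).eq_or_lt with h | h
  · have h1 : s = 0 := by linarith
    have h2 : t = 0 := by linarith
    exact ⟨0, le_rfl, a, ha, by simp [h1, h2]⟩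
  · refine ⟨s + t, h.le, (s / (s + t)) • a + (t / (s + t)) • b,
      hA ha hb (by positivity) (by positivity) (by field_simp), ?_⟩
    rw [smul_add, smul_smul, smul_smul, mul_div_cancel₀ _ h.ne', mul_div_cancel₀ _ h.ne']

lemma coneHull_convex {A : Set E} (hA : Convex ℝ A) : Convex ℝ (coneHull A) := by
  intro p hp q hq a b ha hb _
  exact coneHull_add hA (coneHull_smul hp ha) (coneHull_smul hq hb)

lemma bipolar1 {A : Set E} (hA : Convex ℝ A) (h0 : (0 : E) ∈ A) {p : E}
    (hp : p ∉ closure (coneHull A)) : ∃ f : E →L[ℝ] ℝ, (∀ a ∈ A, 0 ≤ f a) ∧ f p < 0 := by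
  obtain ⟨f, u, h1, h2⟩ := geometric_hahn_banach_point_closed
    (coneHull_convex hA).closure isClosed_closure hp
  have hu : u < 0 := by
    have := h2 0 (subset_closure (subset_coneHull h0))
    simpa using this
  refine ⟨f, fun a ha => ?_, h1.trans hu⟩
  by_contra hneg
  push Not at hneg
  have h3 := h2 ((u / f a) • a) (subset_closure
    ⟨u / f a, div_nonneg_of_nonpos hu.le hneg.le, a, ha, rfl⟩)
  rw [map_smul, smul_eq_mul, div_mul_cancel₀ _ hneg.ne] at h3
  exact lt_irrefl _ h3

lemma bipolar2 {A : Set E} {p : E} (hp : p ∈ closure (coneHull A)) (f : E →L[ℝ] ℝ)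
    (hf : ∀ a ∈ A, 0 ≤ f a) : 0 ≤ f p := by
  have hcl : IsClosed {x : E | 0 ≤ f x} := isClosed_le continuous_const f.continuous
  refine closure_minimal (fun x hx => ?_) hcl hp
  obtain ⟨r, hr, a, ha, rfl⟩ := hx
  show (0:ℝ) ≤ f (r • a)
  simp only [map_smul, smul_eq_mul]
  exact mul_nonneg hr (hf a ha)

lemma closure_coneHull_smul {A : Set E} {p : E} (hp : p ∈ closure (coneHull A)) {r : ℝ}
    (hr : 0 ≤ r) : r • p ∈ closure (coneHull A) :=
  map_mem_closure (continuous_const_smul r) hp (fun _ hx => coneHull_smul hx hr)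

lemma cc_bdd {A : Set E} {w : E} (hw : w ∈ A) (v : E) :
    ∀ᶠ h : ℝ in 𝓝[>] (0:ℝ), 0 ≤ Metric.infDist (w + h • v) A / h ∧
      Metric.infDist (w + h • v) A / h ≤ ‖v‖ := by
  filter_upwards [self_mem_nhdsWithin] with h hh
  have hh : 0 < h := hh
  refine ⟨div_nonneg Metric.infDist_nonneg hh.le, ?_⟩
  rw [div_le_iff₀ hh]
  calc Metric.infDist (w + h • v) A ≤ dist (w + h • v) w := Metric.infDist_le_dist_of_mem hw
    _ = ‖v‖ * h := by
      rw [dist_eq_norm, add_sub_cancel_left, norm_smul, Real.norm_of_nonneg hh.le, mul_comm]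

lemma mem_cc {A : Set E} {w : E} (hw : w ∈ A) (v : E) : v ∈ contingentCone A w ↔
    ∀ ε > 0, ∃ h : ℝ, 0 < h ∧ h < ε ∧ ∃ a ∈ A, dist a (w + h • v) < ε * h := by
  have hb := cc_bdd hw v
  have hB1 : IsBoundedUnder (· ≥ ·) (𝓝[>] (0:ℝ))
      (fun h : ℝ => Metric.infDist (w + h • v) A / h) :=
    ⟨0, by simpa using hb.mono fun h hh => hh.1⟩
  have hB2 : IsBoundedUnder (· ≤ ·) (𝓝[>] (0:ℝ))
      (fun h : ℝ => Metric.infDist (w + h • v) A / h) :=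
    ⟨‖v‖, by simpa using hb.mono fun h hh => hh.2⟩
  constructor
  · intro hv ε hε
    have hv' : Filter.liminf (fun h : ℝ => Metric.infDist (w + h • v) A / h) (𝓝[>] (0:ℝ)) < ε := by
      rw [show Filter.liminf (fun h : ℝ => Metric.infDist (w + h • v) A / h) (𝓝[>] (0:ℝ)) = 0
        from hv]
      exact hε
    have hf := Filter.frequently_lt_of_liminf_lt hB2.isCoboundedUnder_ge hv'
    have hI : ∀ᶠ h : ℝ in 𝓝[>] (0:ℝ), h ∈ Set.Ioo 0 ε := Ioo_mem_nhdsGT hε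
    obtain ⟨h, h1, h2⟩ := (hf.and_eventually hI).exists
    rw [div_lt_iff₀ h2.1, Metric.infDist_lt_iff ⟨w, hw⟩] at h1
    obtain ⟨a, ha, hd⟩ := h1
    exact ⟨h, h2.1, h2.2, a, ha, by rwa [dist_comm]⟩
  · intro H
    refine le_antisymm (le_of_forall_pos_le_add fun ε hε => ?_)
      (Filter.le_liminf_of_le hB2.isCoboundedUnder_ge (hb.mono fun h hh => hh.1))
    rw [zero_add]
    refine Filter.liminf_le_of_frequently_le ?_ hB1
    rw [Filter.frequently_iff]
    intro U hU
    obtain ⟨δ, hδ, hsub⟩ := (mem_nhdsGT_iff_exists_Ioo_subset).1 hU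
    have hδ : 0 < δ := hδ
    obtain ⟨h, h0, h1, a, ha, hd⟩ := H (min δ ε) (lt_min hδ hε)
    refine ⟨h, hsub ⟨h0, h1.trans_le (min_le_left _ _)⟩, ?_⟩
    rw [div_le_iff₀ h0]
    calc Metric.infDist (w + h • v) A ≤ dist (w + h • v) a := Metric.infDist_le_dist_of_mem ha
      _ ≤ min δ ε * h := by rw [dist_comm]; exact hd.le
      _ ≤ ε * h := by gcongr; exact min_le_right _ _

lemma cone_compact {K : Set E} (hK : IsCone K) (hc : IsCompact (K ∩ Metric.sphere (0:E) 1))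
    (R : ℝ) : ∃ S, IsCompact S ∧ S ⊆ K ∧ K ∩ Metric.closedBall 0 R ⊆ S := by
  obtain ⟨x, hx⟩ := hK.1
  have h0 : (0:E) ∈ K := by simpa using hK.2 0 le_rfl x hx
  refine ⟨insert 0 ((fun q : ℝ × E => q.1 • q.2) ''
    (Set.Icc 0 R ×ˢ (K ∩ Metric.sphere (0:E) 1))), ?_, ?_, ?_⟩
  · exact ((isCompact_Icc.prod hc).image (by fun_prop)).insert 0
  · rintro y (rfl | ⟨q, hq, rfl⟩)
    · exact h0
    · exact hK.2 _ hq.1.1 _ hq.2.1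
  · rintro y ⟨hy, hyR⟩
    by_cases hy0 : y = 0
    · exact Or.inl hy0
    · right
      have hn : 0 < ‖y‖ := norm_pos_iff.2 hy0
      refine ⟨(‖y‖, ‖y‖⁻¹ • y), ⟨⟨hn.le, by simpa using hyR⟩, hK.2 _ (by positivity) _ hy, ?_⟩, ?_⟩
      · simp [norm_smul, hn.ne']
      · simp [smul_smul, hn.ne']

lemma cone_closed {K : Set E} (hK : IsCone K) (hc : IsCompact (K ∩ Metric.sphere (0:E) 1)) :
    IsClosed K := by
  refine isClosed_of_closure_subset fun y hy => ?_
  obtain ⟨u, hu, hlim⟩ := mem_closure_iff_seq_limit.1 hy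
  obtain ⟨S, hS, hSK, hKS⟩ := cone_compact hK hc (‖y‖ + 1)
  have : ∀ᶠ n in atTop, u n ∈ S := by
    have := hlim.norm.eventually_lt_const (show ‖y‖ < ‖y‖ + 1 by linarith)
    filter_upwards [this] with n hn
    exact hKS ⟨hu n, by simpa using hn.le⟩
  exact hSK (hS.isClosed.mem_of_tendsto hlim this)

lemma cone_add {K : Set E} (hK : IsCone K) (hcv : Convex ℝ K) {x y : E} (hx : x ∈ K)
    (hy : y ∈ K) : x + y ∈ K := by
  have h := hcv hx hy (a := 1/2) (b := 1/2) (by norm_num) (by norm_num) (by norm_num)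
  have h2 := hK.2 2 (by norm_num) _ h
  rw [smul_add, smul_smul, smul_smul] at h2
  norm_num at h2
  exact h2

lemma pointed_eq {K : Set E} (hP : IsPointed K) {x : E} (h1 : x ∈ K) (h2 : -x ∈ K) : x = 0 := by
  have : x ∈ K ∩ (-K) := ⟨h1, by simpa using h2⟩
  rw [hP] at this
  exact this

/-- The key step in cases (b), (c), (d). -/
lemma henig_key {K : Set E} (hK : IsCone K) (hcv : Convex ℝ K) (hP : IsPointed K)
    (hc : IsCompact (K ∩ Metric.sphere (0:E) 1)) (W O : Set E) (hO : IsOpen O)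
    (hOs : ∀ r : ℝ, 0 < r → ∀ x ∈ O, r • x ∈ O) (hKO : ∀ x ∈ K, x ≠ 0 → x ∈ O)
    (hW : ∀ v ∈ W, -v ∉ O) {k : E} (hk : k ∈ K)
    (hcl : -k ∈ closure (coneHull (W + K))) : k = 0 := by
  by_contra hk0
  have hclosed := cone_closed hK hc
  have hnk : -k ∉ K := fun h => hk0 (pointed_eq hP hk h)
  have hKne : K.Nonempty := hK.1
  have hc0 : 0 < Metric.infDist (-k) K := (hclosed.notMem_iff_infDist_pos hKne).1 hnk
  set c := Metric.infDist (-k) K with hcdef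
  obtain ⟨δ, hδ, hthick⟩ := hc.exists_thickening_subset_open hO
    (fun x hx => hKO x hx.1 (by rintro rfl; simpa using hx.2))
  obtain ⟨p, hp, hd⟩ := Metric.mem_closure_iff.1 hcl (min (δ * c) ‖k‖)
    (lt_min (by positivity) (norm_pos_iff.2 hk0))
  obtain ⟨t, ht, q, ⟨v, hv, y', hy', rfl⟩, rfl⟩ := hp
  have htpos : 0 < t := by
    rcases ht.eq_or_lt with h | h
    · subst h
      have := hd.trans_le (min_le_right _ _)
      simp at this
    · exact h
  -- s = k + t y'
  have hs : k + t • y' ∈ K := cone_add hK hcv hk (hK.2 t ht _ hy')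
  set s := k + t • y' with hsdef
  have hsn : c ≤ ‖s‖ := by
    have := Metric.infDist_le_dist_of_mem (x := -k) (hK.2 t ht _ hy')
    rw [dist_eq_norm] at this
    calc c ≤ ‖-k - t • y'‖ := this
      _ = ‖s‖ := by rw [← norm_neg, hsdef]; congr 1; abel
  have hspos : 0 < ‖s‖ := hc0.trans_le hsn
  have hmem : ‖s‖⁻¹ • (t • (-v)) ∈ O := by
    apply hthick
    rw [Metric.mem_thickening_iff]
    refine ⟨‖s‖⁻¹ • s, ⟨hK.2 _ (by positivity) _ hs, by simp [norm_smul, hspos.ne']⟩, ?_⟩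
    rw [dist_eq_norm, ← smul_sub, norm_smul, norm_inv, norm_norm]
    have h1 : ‖t • (-v) - s‖ < δ * c := by
      have h2 := hd.trans_le (min_le_left _ _)
      rw [dist_eq_norm] at h2
      have h3 : t • (-v) - s = -k - t • (v + y') := by
        rw [hsdef]
        simp only [smul_add, smul_neg]
        abel
      rw [h3]
      exact h2
    rw [inv_mul_lt_iff₀ hspos]
    nlinarith
  have h2 := hOs (‖s‖ * t⁻¹) (by positivity) _ hmem
  rw [smul_smul, smul_smul] at h2
  rw [show ‖s‖ * t⁻¹ * ‖s‖⁻¹ * t = 1 by field_simp, one_smul] at h2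
  exact hW v hv h2

end Helpers


lemma mem_GV {Ω : Set X} {F : X → Set Y} {G : X → Set Z} {Zp : Set Z} {Yp : Set Y} {z : Z} {y : Y} :
    (z, y) ∈ GraphVplus Ω F G Zp Yp ↔ ∃ x ∈ Ω, z ∈ G x + Zp ∧ y ∈ F x + Yp := by
  constructor
  · rintro ⟨v, hv, η, hη, rfl⟩
    simp only [Vmap, Set.mem_iUnion] at hv
    obtain ⟨x, ⟨hx, g, hg, z', hz', ζ, hζ, h⟩, hv⟩ := hv
    rw [Set.mem_singleton_iff] at hz'
    subst hz'
    refine ⟨x, hx, ⟨g, hg, ζ, hζ, ?_⟩, ⟨v, hv, η, hη, rfl⟩⟩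
    simp only at h ⊢
    rw [← h]; abel
  · rintro ⟨x, hx, ⟨g, hg, ζ, hζ, rfl⟩, ⟨v, hv, η, hη, rfl⟩⟩
    refine ⟨v, ?_, η, hη, rfl⟩
    simp only [Vmap, Set.mem_iUnion]
    exact ⟨x, ⟨hx, g, hg, g + ζ, rfl, ζ, hζ, by simp⟩, hv⟩

lemma convex_GV {Ω : Set X} {F : X → Set Y} {G : X → Set Z} {Zp : Set Z} {Yp : Set Y}
    (hSt : StandingHyp Ω F G Zp Yp) : Convex ℝ (GraphVplus Ω F G Zp Yp) := by
  obtain ⟨-, -, -, -, -, -, -, -, -, -, hF, hG⟩ := hSt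
  rintro ⟨z1, y1⟩ h1 ⟨z2, y2⟩ h2 a b ha hb hab
  rw [mem_GV] at h1 h2
  obtain ⟨x1, hx1, hz1, hy1⟩ := h1
  obtain ⟨x2, hx2, hz2, hy2⟩ := h2
  have hf := hF (x := (x1, y1)) ⟨hx1, hy1⟩ (y := (x2, y2)) ⟨hx2, hy2⟩ ha hb hab
  have hg := hG (x := (x1, z1)) ⟨hx1, hz1⟩ (y := (x2, z2)) ⟨hx2, hz2⟩ ha hb hab
  exact mem_GV.2 ⟨a • x1 + b • x2, hf.1, hg.2, hf.2⟩

/-- The translated graph. -/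
def Aset (Ω : Set X) (F : X → Set Y) (G : X → Set Z) (Zp : Set Z) (Yp : Set Y) (y0 : Y) :
    Set (Z × Y) := {p | (p.1, y0 + p.2) ∈ GraphVplus Ω F G Zp Yp}

lemma convex_A {Ω : Set X} {F : X → Set Y} {G : X → Set Z} {Zp : Set Z} {Yp : Set Y} {y0 : Y}
    (hSt : StandingHyp Ω F G Zp Yp) : Convex ℝ (Aset Ω F G Zp Yp y0) := by
  rintro ⟨z1, y1⟩ h1 ⟨z2, y2⟩ h2 a b ha hb hab
  have h := convex_GV hSt h1 h2 ha hb hab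
  have e : a • (y0 + y1) + b • (y0 + y2) = y0 + (a • y1 + b • y2) := by
    have : y0 = (a + b) • y0 := by rw [hab, one_smul]
    conv_rhs => rw [this]
    rw [add_smul, smul_add, smul_add]; abel
  show (a • z1 + b • z2, y0 + (a • y1 + b • y2)) ∈ GraphVplus Ω F G Zp Yp
  rw [← e]
  exact h

lemma cone_zero {K : Set Y} (hK : IsCone K) : (0 : Y) ∈ K := by
  obtain ⟨x, hx⟩ := hK.1
  simpa using hK.2 0 le_rfl x hx

/-- `A` contains `Z₊ × Y₊`. -/
lemma prod_sub_A {Ω : Set X} {F : X → Set Y} {G : X → Set Z} {Zp : Set Z} {Yp : Set Y} {y0 : Y}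
    (hSt : StandingHyp Ω F G Zp Yp) {x0 : X} (hx0Ω : x0 ∈ Ω) (hx0feas : (G x0 ∩ (-Zp)).Nonempty)
    (hy0F : y0 ∈ F x0) {ζ : Z} (hζ : ζ ∈ Zp) {η : Y} (hη : η ∈ Yp) :
    (ζ, η) ∈ Aset Ω F G Zp Yp y0 := by
  obtain ⟨-, -, -, -, hZ, -, -, hZc, -⟩ := hSt
  obtain ⟨g, hg, hgz⟩ := hx0feas
  refine mem_GV.2 ⟨x0, hx0Ω, ⟨g, hg, -g + ζ, cone_add hZ hZc hgz hζ, by simp⟩,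
    ⟨y0, hy0F, η, hη, rfl⟩⟩

lemma lagrange_iff {Ω : Set X} {F : X → Set Y} {G : X → Set Z} {Zp : Set Z} {Yp : Set Y} {y0 : Y}
    (hSt : StandingHyp Ω F G Zp Yp) {x0 : X} (hx0Ω : x0 ∈ Ω) (hx0feas : (G x0 ∩ (-Zp)).Nonempty)
    (hy0F : y0 ∈ F x0) (z : Z) (y : Y) :
    (-z, y) ∈ GraphLagrange Ω F G Zp Yp y0 ↔
      (z, y) ∈ closure (coneHull (Aset Ω F G Zp Yp y0)) := by
  have hZ := hSt.2.2.2.2.1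
  have hY := hSt.1
  constructor
  · intro h
    by_contra hn
    have h0A : (0 : Z × Y) ∈ Aset Ω F G Zp Yp y0 :=
      prod_sub_A hSt hx0Ω hx0feas hy0F (cone_zero hZ) (cone_zero hY)
    obtain ⟨f, hf, hfp⟩ := bipolar1 (E := Z × Y) (A := Aset Ω F G Zp Yp y0) (convex_A hSt) h0A hn
    obtain ⟨zs, hzs⟩ : ∃ zs : Z →L[ℝ] ℝ, ∀ a, zs a = f (a, 0) :=
      ⟨f.comp (ContinuousLinearMap.inl ℝ Z Y), fun a => rfl⟩
    obtain ⟨ys, hys⟩ : ∃ ys : Y →L[ℝ] ℝ, ∀ b, ys b = f (0, b) :=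
      ⟨f.comp (ContinuousLinearMap.inr ℝ Z Y), fun b => rfl⟩
    have hsplit : ∀ (a : Z) (b : Y), f (a, b) = zs a + ys b := by
      intro a b
      rw [hzs, hys, ← f.map_add, Prod.mk_add_mk, add_zero, zero_add]
    have hmem : (zs, ys) ∈ Sdual Ω F G Zp Yp y0 := by
      constructor
      · rintro z' hz' y' ⟨y1, hy1, η, hη, rfl⟩
        rw [Set.mem_singleton_iff] at hy1
        subst hy1
        have := hf _ (prod_sub_A hSt hx0Ω hx0feas hy0F hz' hη)
        rw [hsplit, map_neg] at this
        simp only [map_sub] at this ⊢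
        linarith
      · rintro ⟨z', y'⟩ hq
        have := hf (z', y' - y0) (by
          show (z', y0 + (y' - y0)) ∈ GraphVplus Ω F G Zp Yp
          rwa [add_sub_cancel])
        rw [hsplit, map_sub] at this
        simp only
        linarith
    have h1 := h _ hmem
    rw [hsplit] at hfp
    simp only [map_neg] at h1
    linarith
  · rintro h ⟨zs, ys⟩ ⟨-, hq⟩
    have := bipolar2 h (zs.coprod ys) (by
      rintro ⟨a, b⟩ hab
      have := hq _ hab
      simp only [map_add, ContinuousLinearMap.coprod_apply] at this ⊢
      linarith)
    simp only [ContinuousLinearMap.coprod_apply, map_neg] at this ⊢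
    linarith

/-- Under Slater, slices of the closed tangent cone at `0`. -/
lemma slater_slice {Ω : Set X} {F : X → Set Y} {G : X → Set Z} {Zp : Set Z} {Yp : Set Y} {y0 : Y}
    (hSt : StandingHyp Ω F G Zp Yp) (hSl : Slater Ω F G Zp) {w : Y}
    (hw : ((0 : Z), w) ∈ closure (coneHull (Aset Ω F G Zp Yp y0))) :
    w ∈ closure (coneHull ((Vmap Ω F G Zp 0 - {y0}) + Yp)) := by
  have hA := convex_A (y0 := y0) hSt
  obtain ⟨x1, hx1, ⟨f1, hf1⟩, g, hg, hgi⟩ := hSl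
  have hY := hSt.1
  obtain ⟨ρ, hρ, hball⟩ := Metric.mem_nhds_iff.1 (mem_interior_iff_mem_nhds.1 hgi)
  have hU : ∀ u : Z, ‖u‖ < ρ → (u, f1 - y0) ∈ Aset Ω F G Zp Yp y0 := by
    intro u hu
    refine mem_GV.2 ⟨x1, hx1, ⟨g, hg, -g + u, hball (by simpa [dist_eq_norm] using hu), by simp⟩,
      ⟨f1, hf1, 0, cone_zero hY, by simp⟩⟩
  rw [Metric.mem_closure_iff]
  intro ε hε
  -- choose δ
  set c := f1 - y0 with hc
  set δ := ε / (1 + 2 * ‖c‖ / ρ) with hδdef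
  have hden : 0 < 1 + 2 * ‖c‖ / ρ := by positivity
  have hδ : 0 < δ := by positivity
  obtain ⟨⟨a, b⟩, hab, hd⟩ := Metric.mem_closure_iff.1 hw δ hδ
  rw [Prod.dist_eq, max_lt_iff] at hd
  obtain ⟨hda, hdb⟩ := hd
  simp only [dist_eq_norm, zero_sub, norm_neg] at hda hdb
  set τ := 2 * δ / ρ with hτ
  have hτpos : 0 < τ := by positivity
  have hu : (-(τ⁻¹ • a), c) ∈ Aset Ω F G Zp Yp y0 := by
    apply hU
    rw [norm_neg, norm_smul, norm_inv, Real.norm_of_nonneg hτpos.le, inv_mul_lt_iff₀ hτpos, hτ]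
    rw [div_mul_cancel₀ _ hρ.ne']
    linarith
  have hsum := coneHull_add hA hab (coneHull_smul (subset_coneHull hu) hτpos.le)
  have e : (a, b) + τ • (-(τ⁻¹ • a), c) = (0, b + τ • c) := by
    ext
    · simp [smul_smul, hτpos.ne']
    · simp
  rw [e] at hsum
  refine ⟨b + τ • c, ?_, ?_⟩
  · obtain ⟨r, hr, ⟨z', y'⟩, ha', he⟩ := hsum
    rw [Prod.smul_mk, Prod.mk.injEq] at he
    rcases hr.eq_or_lt with h | h
    · rw [he.2, ← h]
      refine ⟨0, le_rfl, ?_⟩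
      -- nonempty: `f1 - y0`
      have h0 := hU 0 (by simpa using hρ)
      obtain ⟨v, hv, η, hη, -⟩ := h0
      exact ⟨v - y0 + η, ⟨v - y0, ⟨v, hv, y0, rfl, rfl⟩, η, hη, rfl⟩, by simp⟩
    · have hz' : z' = 0 := by
        rcases smul_eq_zero.1 he.1.symm with h' | h'
        · exact absurd h' h.ne'
        · exact h'
      subst hz'
      obtain ⟨v, hv, η, hη, hvη⟩ := ha'
      refine ⟨r, hr, y', ⟨v - y0, ⟨v, hv, y0, rfl, rfl⟩, η, hη, ?_⟩, he.2⟩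
      simp only at hvη ⊢
      rw [sub_add_eq_add_sub, hvη]; simp
  · rw [dist_eq_norm]
    calc ‖w - (b + τ • c)‖ = ‖(w - b) - τ • c‖ := by congr 1; abel
      _ ≤ ‖w - b‖ + ‖τ • c‖ := norm_sub_le _ _
      _ < δ + τ * ‖c‖ := by
        rw [norm_smul, Real.norm_of_nonneg hτpos.le]; linarith
      _ = δ * (1 + 2 * ‖c‖ / ρ) := by rw [hτ]; ring
      _ = ε := by rw [hδdef]; exact div_mul_cancel₀ _ hden.ne'

lemma mem_Min_iff {Yp : Set Y} (A : Set Y) (a : Y) :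
    a ∈ MinSet Yp A ↔ a ∈ A ∧ ∀ b ∈ A, a - b ∈ Yp → b - a ∈ Yp := by
  have h1 : ∀ b : Y, b ∈ ({a} : Set Y) - Yp ↔ a - b ∈ Yp := by
    intro b
    constructor
    · rintro ⟨a', ha', η, hη, rfl⟩
      rw [Set.mem_singleton_iff] at ha'
      subst ha'
      simpa using hη
    · intro h
      exact ⟨a, rfl, a - b, h, by simp⟩
  have h2 : ∀ b : Y, b ∈ ({a} : Set Y) + Yp ↔ b - a ∈ Yp := by
    intro b
    constructor
    · rintro ⟨a', ha', η, hη, rfl⟩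
      rw [Set.mem_singleton_iff] at ha'
      subst ha'
      simpa using hη
    · intro h
      exact ⟨a, rfl, b - a, h, by simp⟩
  constructor
  · rintro ⟨h, h'⟩
    exact ⟨h, fun b hb hab => (h2 b).1 (h' ⟨hb, (h1 b).2 hab⟩)⟩
  · rintro ⟨h, h'⟩
    exact ⟨h, fun b hb => (h2 b).2 (h' b hb.1 ((h1 b).1 hb.2))⟩

lemma min_eq {Yp : Set Y} (hK : IsCone Yp) (hcv : Convex ℝ Yp) (hP : IsPointed Yp) {D T : Set Y}
    (hDT : D ⊆ T) (hTD : ∀ t ∈ T, ∃ k ∈ Yp, t - k ∈ D) : MinSet Yp D = MinSet Yp T := by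
  ext a
  rw [mem_Min_iff, mem_Min_iff]
  constructor
  · rintro ⟨ha, hmin⟩
    refine ⟨hDT ha, fun b hb hab => ?_⟩
    obtain ⟨k, hk, hm⟩ := hTD b hb
    have h1 : a - (b - k) ∈ Yp := by
      rw [show a - (b - k) = (a - b) + k by abel]
      exact cone_add hK hcv hab hk
    have h2 := hmin _ hm h1
    have h3 := pointed_eq hP h1 (by rwa [neg_sub])
    rwa [show b - a = k by rw [sub_eq_zero] at h3; rw [h3]; abel]
  · rintro ⟨ha, hmin⟩
    obtain ⟨k, hk, hm⟩ := hTD a ha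
    have h1 : a - (a - k) ∈ Yp := by simpa using hk
    have h2 := hmin _ (hDT hm) h1
    have h3 := pointed_eq hP h1 (by rwa [neg_sub])
    rw [sub_eq_zero] at h3
    rw [← h3] at hm
    exact ⟨hm, fun b hb hab => hmin b (hDT hb) hab⟩

lemma tangent_key {Ω : Set X} {F : X → Set Y} {G : X → Set Z} {Zp : Set Z} {Yp : Set Y}
    (hSt : StandingHyp Ω F G Zp Yp) {y0 : Y} (hy0 : MinimalPoint Ω F G Zp Yp y0)
    (hcpt : IsCompact (Yp ∩ Metric.sphere (0:Y) 1))
    (hdom : ∃ V0 ∈ 𝓝 (0:Z), ∀ z ∈ V0, Vmap Ω F G Zp z ⊆ Mmap Ω F G Zp Yp z + Yp)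
    (h0A : (0 : Z × Y) ∈ Aset Ω F G Zp Yp y0)
    (hkey : ∀ k ∈ Yp, ((0:Z), -k) ∈ closure (coneHull (Aset Ω F G Zp Yp y0)) → k = 0)
    (z : Z) (y : Y) (hzy : (z, y) ∈ closure (coneHull (Aset Ω F G Zp Yp y0))) :
    ∃ k ∈ Yp, (z, y - k) ∈ contingentCone (graph (Mmap Ω F G Zp Yp)) (0, y0) := by
  have hA := convex_A (y0 := y0) hSt
  have hK := hSt.1
  have hKc := hSt.2.2.2.1
  set T := closure (coneHull (Aset Ω F G Zp Yp y0)) with hT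
  obtain ⟨V0, hV0, hV⟩ := hdom
  -- uniform gap
  obtain ⟨δ, hδ, hgap⟩ : ∃ δ > 0, ∀ k ∈ Yp, ∀ q : Z × Y, (q.1, q.2 - k) ∈ T → δ * ‖k‖ ≤ ‖q‖ := by
    have hcomp : IsCompact ((fun k : Y => ((0:Z), -k)) '' (Yp ∩ Metric.sphere (0:Y) 1)) :=
      hcpt.image (by fun_prop)
    obtain ⟨δ, hδ, hth⟩ := hcomp.exists_thickening_subset_open
      (t := Tᶜ) isClosed_closure.isOpen_compl (by
        rintro _ ⟨k, ⟨hk, hk1⟩, rfl⟩ hmem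
        have := hkey k hk hmem
        subst this
        simp at hk1)
    refine ⟨δ, hδ, fun k hk q hq => ?_⟩
    by_cases hk0 : k = 0
    · simp [hk0]
    have hn : 0 < ‖k‖ := norm_pos_iff.2 hk0
    by_contra hlt
    push Not at hlt
    refine hth ?_ (closure_coneHull_smul hq (r := ‖k‖⁻¹) (by positivity))
    rw [Metric.mem_thickening_iff]
    refine ⟨_, ⟨‖k‖⁻¹ • k, ⟨hK.2 _ (by positivity) _ hk, by simp [norm_smul, hn.ne']⟩, rfl⟩, ?_⟩
    rw [dist_eq_norm]
    have : ‖k‖⁻¹ • (q.1, q.2 - k) - ((0:Z), -(‖k‖⁻¹ • k)) = ‖k‖⁻¹ • q := by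
      ext
      · simp
      · simp [smul_sub]
    rw [this, norm_smul, norm_inv, norm_norm, inv_mul_lt_iff₀ hn]
    linarith
  -- approximants
  have hstep : ∀ n : ℕ, ∃ (h : ℝ) (zn : Z) (yn : Y) (k : Y), 0 < h ∧ h < 1 / ((n:ℝ) + 1) ∧
      dist (zn, yn) (z, y) < 1 / ((n:ℝ) + 1) ∧ k ∈ Yp ∧
      (h • zn, y0 + h • (yn - k)) ∈ graph (Mmap Ω F G Zp Yp) ∧ (zn, yn - k) ∈ T := by
    intro n
    have hε : (0:ℝ) < 1 / ((n:ℝ) + 1) := by positivity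
    obtain ⟨⟨zn, yn⟩, hmem, hd⟩ := Metric.mem_closure_iff.1 hzy _ hε
    obtain ⟨r, hr, a, ha, hra⟩ := hmem
    have hlim : Tendsto (fun h : ℝ => h • zn) (𝓝[>] 0) (𝓝 (0:Z)) := by
      have : Tendsto (fun h : ℝ => h • zn) (𝓝 0) (𝓝 ((0:ℝ) • zn)) :=
        (continuous_id.smul continuous_const).tendsto 0
      rw [zero_smul] at this
      exact this.mono_left nhdsWithin_le_nhds
    have hm : 0 < min (1 / ((n:ℝ) + 1)) (1 / (r + 1)) := lt_min hε (by positivity)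
    obtain ⟨h, h1, h2⟩ := ((hlim.eventually hV0).and (Ioo_mem_nhdsGT hm)).exists
    have hpos : 0 < h := h2.1
    have hhr : h * r ≤ 1 := by
      have h3 : h < 1 / (r + 1) := h2.2.trans_le (min_le_right _ _)
      rw [lt_div_iff₀ (by positivity)] at h3
      nlinarith
    have hAm : h • (zn, yn) ∈ Aset Ω F G Zp Yp y0 := by
      rw [hra, smul_smul]
      have := hA ha h0A (a := h * r) (b := 1 - h * r) (by positivity) (by linarith) (by ring)
      simpa using this
    obtain ⟨v, hv, η, hη, hvη⟩ := hAm
    obtain ⟨m, hmM, η', hη', hmη⟩ := hV _ h1 hv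
    have hηη : η' + η ∈ Yp := cone_add hK hKc hη' hη
    simp only [Prod.smul_mk] at hvη hmη
    have hmeq : m = y0 + h • (yn - h⁻¹ • (η' + η)) := by
      rw [smul_sub, smul_smul, mul_inv_cancel₀ hpos.ne', one_smul, ← add_sub_assoc, ← hvη, ← hmη]
      abel
    rw [hmeq] at hmM
    refine ⟨h, zn, yn, h⁻¹ • (η' + η), hpos, h2.2.trans_le (min_le_left _ _), by rwa [dist_comm],
      hK.2 _ (by positivity) _ hηη, hmM, ?_⟩
    refine subset_closure ⟨h⁻¹, by positivity, (h • zn, h • (yn - h⁻¹ • (η' + η))), ?_, ?_⟩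
    · exact ⟨_, hmM.1, 0, cone_zero hK, by simp⟩
    · simp only [Prod.smul_mk, smul_smul, inv_mul_cancel₀ hpos.ne', one_smul]
  choose h zn yn k hpos hlt hd hk hM hTn using hstep
  have hbound : ∀ n, k n ∈ Yp ∩ Metric.closedBall 0 ((‖(z, y)‖ + 1) / δ) := by
    intro n
    refine ⟨hk n, ?_⟩
    rw [mem_closedBall_zero_iff, le_div_iff₀ hδ]
    have h1 := hgap _ (hk n) (zn n, yn n) (hTn n)
    have h2 : ‖(zn n, yn n)‖ ≤ ‖(z, y)‖ + 1 := by
      have h3 := hd n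
      rw [dist_eq_norm] at h3
      have h4 : 1 / ((n:ℝ) + 1) ≤ 1 := by
        rw [div_le_one (by positivity)]
        have : (0:ℝ) ≤ n := n.cast_nonneg
        linarith
      have h5 := norm_le_norm_add_norm_sub' (zn n, yn n) (z, y)
      linarith
    linarith
  obtain ⟨S, hS, hSK, hKS⟩ := cone_compact hK hcpt ((‖(z, y)‖ + 1) / δ)
  obtain ⟨k0, hk0, φ, hφ, hφlim⟩ := hS.tendsto_subseq (fun n => hKS (hbound n))
  refine ⟨k0, hSK hk0, ?_⟩
  rw [mem_cc (show ((0:Z), y0) ∈ graph (Mmap Ω F G Zp Yp) from ⟨hy0.1, hy0.2⟩)]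
  intro ε hε
  have hone : Tendsto (fun n : ℕ => 1 / ((n:ℝ) + 1)) atTop (𝓝 0) :=
    tendsto_one_div_add_atTop_nhds_zero_nat
  have e1 : ∀ᶠ n in atTop, 1 / (((φ n : ℕ):ℝ) + 1) < ε / 2 :=
    (hone.comp hφ.tendsto_atTop).eventually_lt_const (by positivity)
  have e2 : ∀ᶠ n in atTop, dist (k (φ n)) k0 < ε / 2 :=
    (Metric.tendsto_nhds.1 hφlim) _ (by positivity)
  obtain ⟨n, hn1, hn2⟩ := (e1.and e2).exists
  refine ⟨h (φ n), hpos _, by linarith [hlt (φ n)], _, hM (φ n), ?_⟩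
  have hd' := (hd (φ n)).trans hn1
  set m := φ n
  have hp := hpos m
  rw [Prod.dist_eq, max_lt_iff] at hd'
  obtain ⟨hdz, hdy⟩ := hd'
  simp only [dist_eq_norm] at hdz hdy hn2
  rw [Prod.dist_eq, max_lt_iff]
  constructor
  · simp only [Prod.smul_mk, Prod.mk_add_mk, zero_add, dist_eq_norm]
    rw [← smul_sub, norm_smul, Real.norm_of_nonneg hp.le]
    nlinarith
  · simp only [Prod.smul_mk, Prod.mk_add_mk, dist_eq_norm]
    rw [add_sub_add_left_eq_sub, ← smul_sub, norm_smul, Real.norm_of_nonneg hp.le, mul_comm]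
    gcongr
    calc ‖yn m - k m - (y - k0)‖ = ‖(yn m - y) - (k m - k0)‖ := by congr 1; abel
      _ ≤ ‖yn m - y‖ + ‖k m - k0‖ := norm_sub_le _ _
      _ < ε := by linarith

theorem stmt_18 (Ω : Set X) (F : X → Set Y) (G : X → Set Z) (Zp : Set Z) (Yp : Set Y)
    (hSt : StandingHyp Ω F G Zp Yp)
    (hYpPointed : IsPointed Yp)
    (y0 : Y) (hy0 : MinimalPoint Ω F G Zp Yp y0)
    (x0 : X) (hx0Ω : x0 ∈ Ω) (hx0feas : (G x0 ∩ (-Zp)).Nonempty) (hy0F : y0 ∈ F x0)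
    (hSl : Slater Ω F G Zp)
    (hcpt : IsCompact (Yp ∩ Metric.sphere (0:Y) 1))
    (hdom : ∃ V0 ∈ 𝓝 (0:Z), ∀ z ∈ V0, Vmap Ω F G Zp z ⊆ Mmap Ω F G Zp Yp z + Yp)
    (hcases :
      -- (a) Graph(L_{y₀}) has a bounded base
      (∃ Θ : Set (Z × Y), Convex ℝ Θ ∧ (0 : Z × Y) ∉ closure Θ ∧
          GraphLagrange Ω F G Zp Yp y0 = coneHull Θ ∧ Bornology.IsBounded Θ) ∨
      -- (b) Y₊ ∖ {0} is open
      IsOpen (Yp \ {0}) ∨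
      -- (c) y₀ is a Henig global properly efficient point of V(0)
      (∃ K : Set Y, IsCone K ∧ IsPointed K ∧ Yp \ {0} ⊆ interior K ∧
          (Vmap Ω F G Zp 0 - {y0}) ∩ (-interior K) = ∅) ∨
      -- (d) y₀ is a Henig properly efficient point of V(0)
      (∃ Θ : Set Y, Convex ℝ Θ ∧ (0:Y) ∉ closure Θ ∧ Yp = coneHull Θ ∧
          ∃ ε : ℝ, 0 < ε ∧
            closure (coneHull (Vmap Ω F G Zp 0 - {y0})) ∩
              (-closure (coneHull (Θ + ε • Metric.closedBall (0:Y) 1))) = {0})) :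
    ∀ z : Z, MinSet Yp (contingentDeriv (Mmap Ω F G Zp Yp) 0 y0 z) =
      MinSet Yp (Lagrange Ω F G Zp Yp y0 (-z)) := by
  have hK := hSt.1
  have hProper := hSt.2.1
  have hKc := hSt.2.2.2.1
  have hZ := hSt.2.2.2.2.1
  have h0A : (0 : Z × Y) ∈ Aset Ω F G Zp Yp y0 :=
    prod_sub_A hSt hx0Ω hx0feas hy0F (cone_zero hZ) (cone_zero hK)
  have hkey : ∀ k ∈ Yp, ((0:Z), -k) ∈ closure (coneHull (Aset Ω F G Zp Yp y0)) → k = 0 := by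
    intro k hk hmem
    -- reduction to an open cone
    have hred : ∀ O : Set Y, IsOpen O → (∀ r : ℝ, 0 < r → ∀ x ∈ O, r • x ∈ O) →
        (∀ x ∈ Yp, x ≠ 0 → x ∈ O) → (∀ v ∈ Vmap Ω F G Zp 0 - {y0}, -v ∉ O) → k = 0 :=
      fun O h1 h2 h3 h4 => henig_key hK hKc hYpPointed hcpt _ O h1 h2 h3 h4 hk
        (slater_slice hSt hSl hmem)
    have hints : ∀ K : Set Y, (∀ r : ℝ, 0 ≤ r → ∀ x ∈ K, r • x ∈ K) →
        ∀ r : ℝ, 0 < r → ∀ x ∈ interior K, r • x ∈ interior K := by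
      intro K hKs r hr x hx
      have h1 : r • x ∈ r • interior K := Set.smul_mem_smul_set hx
      refine interior_maximal ?_ (isOpen_interior.smul₀ hr.ne') h1
      rintro _ ⟨u, hu, rfl⟩
      exact hKs r hr.le u (interior_subset hu)
    rcases hcases with ⟨Θ, hΘ, h0, hΘe, -⟩ | hopen | ⟨K, hKK, hKP, hsub, hdisj⟩ |
      ⟨Θ, hΘ, h0, hΘe, ε, hε, hint⟩
    · have h1 : ((0:Z), -k) ∈ GraphLagrange Ω F G Zp Yp y0 := by
        have := (lagrange_iff hSt hx0Ω hx0feas hy0F (0:Z) (-k)).2 hmem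
        rwa [neg_zero] at this
      have h2 : ((0:Z), k) ∈ GraphLagrange Ω F G Zp Yp y0 := by
        have := (lagrange_iff hSt hx0Ω hx0feas hy0F (0:Z) k).2 (subset_closure (subset_coneHull
          (prod_sub_A hSt hx0Ω hx0feas hy0F (cone_zero hZ) hk)))
        rwa [neg_zero] at this
      rw [hΘe] at h1 h2
      obtain ⟨r, hr, a, ha, e1⟩ := h1
      obtain ⟨s, hs, b, hb, e2⟩ := h2
      by_contra hk0
      have hr' : 0 < r := by
        rcases hr.eq_or_lt with h | h
        · rw [← h, zero_smul, Prod.mk_eq_zero] at e1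
          exact absurd (neg_eq_zero.1 e1.2) hk0
        · exact h
      have hsum : r • a + s • b = 0 := by rw [← e1, ← e2]; simp
      have hpos : 0 < r + s := by linarith
      have h3 := hΘ ha hb (a := r / (r + s)) (b := s / (r + s)) (by positivity) (by positivity)
        (by field_simp)
      apply h0
      apply subset_closure
      have : (r / (r + s)) • a + (s / (r + s)) • b = (r + s)⁻¹ • (r • a + s • b) := by
        rw [smul_add, smul_smul, smul_smul]
        congr 2 <;> field_simp
      rwa [this, hsum, smul_zero] at h3
    · refine hred (Yp \ {0}) hopen ?_ (fun x hx hx0 => ⟨hx, hx0⟩) ?_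
      · intro r hr x hx
        exact ⟨hK.2 r hr.le x hx.1, by
          simp only [Set.mem_singleton_iff, smul_eq_zero, not_or]; exact ⟨hr.ne', hx.2⟩⟩
      · rintro _ ⟨v, hv, y1, hy1, rfl⟩ hO
        rw [Set.mem_singleton_iff] at hy1
        subst hy1
        have hmin : y1 ∈ MinSet Yp (Vmap Ω F G Zp 0) := ⟨hy0.1, hy0.2⟩
        rw [mem_Min_iff] at hmin
        simp only [neg_sub] at hO
        have h1 := hmin.2 v hv hO.1
        exact hO.2 (pointed_eq hYpPointed hO.1 (by rwa [neg_sub]))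
    · refine hred (interior K) isOpen_interior (hints K hKK.2) (fun x hx hx0 => hsub ⟨hx, hx0⟩) ?_
      intro v hv hO
      have : v ∈ (Vmap Ω F G Zp 0 - {y0}) ∩ (-interior K) := ⟨hv, hO⟩
      rw [hdisj] at this
      exact this
    · set H := coneHull (Θ + ε • Metric.closedBall (0:Y) 1) with hH
      refine hred (interior H \ {0}) (isOpen_interior.sdiff isClosed_singleton) ?_ ?_ ?_
      · intro r hr x hx
        exact ⟨hints H (fun r hr x hx => coneHull_smul hx hr) r hr x hx.1, by
          simp only [Set.mem_singleton_iff, smul_eq_zero, not_or]; exact ⟨hr.ne', hx.2⟩⟩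
      · intro x hx hx0
        refine ⟨?_, hx0⟩
        rw [hΘe] at hx
        obtain ⟨r, hr, θ, hθ, rfl⟩ := hx
        have hr' : 0 < r := by
          rcases hr.eq_or_lt with h | h
          · rw [← h, zero_smul] at hx0
            exact absurd rfl hx0
          · exact h
        refine hints H (fun r hr x hx => coneHull_smul hx hr) r hr' θ ?_
        rw [mem_interior_iff_mem_nhds]
        refine Filter.mem_of_superset (Metric.closedBall_mem_nhds θ hε) ?_
        intro u hu
        refine subset_coneHull ⟨θ, hθ, u - θ, ⟨ε⁻¹ • (u - θ), ?_, ?_⟩, by simp⟩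
        · rw [mem_closedBall_zero_iff, norm_smul, norm_inv, Real.norm_of_nonneg hε.le,
            inv_mul_le_iff₀ hε, mul_one, ← dist_eq_norm]
          exact hu
        · simp [smul_smul, hε.ne']
      · rintro v hv ⟨hO, hO0⟩
        have : v ∈ closure (coneHull (Vmap Ω F G Zp 0 - {y0})) ∩ (-closure H) :=
          ⟨subset_closure (subset_coneHull hv), subset_closure (interior_subset hO)⟩
        rw [hint, Set.mem_singleton_iff] at this
        exact hO0 (by simp [this])
  intro z
  refine min_eq hK hKc hYpPointed ?_ ?_
  · intro y hy
    refine (lagrange_iff hSt hx0Ω hx0feas hy0F z y).2 ?_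
    have hy' := (mem_cc (show ((0:Z), y0) ∈ graph (Mmap Ω F G Zp Yp) from ⟨hy0.1, hy0.2⟩) _).1 hy
    rw [Metric.mem_closure_iff]
    intro ε hε
    obtain ⟨h, hp, -, ⟨a, b⟩, hab, hd⟩ := hy' ε hε
    refine ⟨h⁻¹ • (a, b - y0), coneHull_smul (subset_coneHull ?_) (by positivity), ?_⟩
    · exact ⟨b, hab.1, 0, cone_zero hK, by simp⟩
    · have e : (z, y) - h⁻¹ • (a, b - y0) = h⁻¹ • (((0:Z), y0) + h • (z, y) - (a, b)) := by
        rw [Prod.smul_mk, Prod.smul_mk, Prod.mk_add_mk, Prod.mk_sub_mk, Prod.mk_sub_mk,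
          Prod.smul_mk]
        ext
        · simp [smul_sub, smul_smul, hp.ne']
        · simp [smul_sub, smul_add, smul_smul, hp.ne']
          abel
      rw [dist_eq_norm, e, norm_smul, norm_inv, Real.norm_of_nonneg hp.le, inv_mul_lt_iff₀ hp,
        ← dist_eq_norm, dist_comm, mul_comm]
      exact hd
  · intro y hy
    exact tangent_key hSt hy0 hcpt hdom h0A hkey z y
      ((lagrange_iff hSt hx0Ω hx0feas hy0F z y).1 hy)

end Paper
end

section
/- Let X be a real normed space, T a continuous linear functional on X, and x_0 ∈ X with T(x_0) > 0. Fix n ≥ 1, ε > 0, continuous linear functionals T_1, …, T_n on X, and set W := ∩_{i=1}^n {x ∈ X : T_i(x) ≤ ε}. Assume {x ∈ X : T(x) ≤ 0} ∩ (x_0+W) = ∅. Then cl(cone(x_0+W)) = (∩_{i=1}^n {x ∈ X : T_i(x) ≤ 0}) ∪ cone(x_0+W). As a consequence, cl(cone(x_0+W)) ∩ Ker(T) contains the closed subspace (∩_{i=1}^n Ker(T_i)) ∩ Ker(T) of finite codimension. -/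
open Pointwise Filter Topology

namespace Paper

theorem stmt_19 {X : Type*} [NormedAddCommGroup X] [NormedSpace ℝ X]
    (T : X →L[ℝ] ℝ) (x0 : X) (hT : 0 < T x0)
    (n : ℕ) (hn : 1 ≤ n) (ε : ℝ) (hε : 0 < ε)
    (Ti : Fin n → (X →L[ℝ] ℝ))
    (hdisj : {x : X | T x ≤ 0} ∩
      (({x0} : Set X) + ⋂ i, {x : X | Ti i x ≤ ε}) = ∅) :
    closure (coneHull (({x0} : Set X) + ⋂ i, {x : X | Ti i x ≤ ε})) =
        (⋂ i, {x : X | Ti i x ≤ 0}) ∪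
          coneHull (({x0} : Set X) + ⋂ i, {x : X | Ti i x ≤ ε}) ∧
      (((⨅ i, LinearMap.ker (Ti i : X →ₗ[ℝ] ℝ)) ⊓ LinearMap.ker (T : X →ₗ[ℝ] ℝ) : Submodule ℝ X) : Set X) ⊆
        closure (coneHull (({x0} : Set X) + ⋂ i, {x : X | Ti i x ≤ ε})) ∩
          {x : X | T x = 0} ∧
      FiniteDimensional ℝ
        (X ⧸ ((⨅ i, LinearMap.ker (Ti i : X →ₗ[ℝ] ℝ)) ⊓ LinearMap.ker (T : X →ₗ[ℝ] ℝ) : Submodule ℝ X)) := by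
  set A : Set X := ({x0} : Set X) + ⋂ i, {x : X | Ti i x ≤ ε} with hA
  have memA : ∀ a, a ∈ A ↔ ∀ i, Ti i a ≤ ε + Ti i x0 := by
    intro a
    rw [hA, Set.singleton_add, Set.mem_image]
    constructor
    · rintro ⟨w, hw, rfl⟩ i
      have := Set.mem_iInter.1 hw i
      simp only [Set.mem_setOf_eq] at this
      simp only [map_add]
      linarith
    · intro h
      refine ⟨a - x0, Set.mem_iInter.2 fun i => ?_, by abel⟩
      simp only [Set.mem_setOf_eq, map_sub]
      linarith [h i]
  have h0 : (0 : X) ∉ A := by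
    intro h
    have : (0 : X) ∈ {x : X | T x ≤ 0} ∩ A := ⟨by simp, h⟩
    rw [hdisj] at this
    exact this
  obtain ⟨j, hj⟩ : ∃ j, ε + Ti j x0 < 0 := by
    by_contra! h
    exact h0 ((memA 0).2 fun i => by simpa using h i)
  have hsub : closure (coneHull A) ⊆ (⋂ i, {x : X | Ti i x ≤ 0}) ∪ coneHull A := by
    intro x hx
    obtain ⟨u, hu, hux⟩ := mem_closure_iff_seq_limit.1 hx
    choose r hr a ha hua using hu
    have hle : ∀ k i, Ti i (u k) ≤ r k * (ε + Ti i x0) := by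
      intro k i
      rw [hua k, map_smul, smul_eq_mul]
      exact mul_le_mul_of_nonneg_left ((memA _).1 (ha k) i) (hr k)
    have hT' : ∀ i, Tendsto (fun k => Ti i (u k)) atTop (𝓝 (Ti i x)) := fun i =>
      ((Ti i).continuous.tendsto x).comp hux
    obtain ⟨m, hm⟩ := (hT' j).bddBelow_range
    have hb : ∀ k, r k ∈ Set.Icc 0 (m / (ε + Ti j x0)) := by
      intro k
      refine ⟨hr k, ?_⟩
      rw [le_div_iff_of_neg hj]
      exact (hm ⟨k, rfl⟩).trans (hle k j)
    obtain ⟨s, hs, φ, hφ, hlim⟩ := isCompact_Icc.tendsto_subseq hb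
    have hx' : ∀ i, Ti i x ≤ s * (ε + Ti i x0) := fun i =>
      le_of_tendsto_of_tendsto' ((hT' i).comp hφ.tendsto_atTop) (hlim.mul_const _)
        fun k => hle (φ k) i
    rcases hs.1.eq_or_lt with h | h
    · left
      refine Set.mem_iInter.2 fun i => ?_
      have := hx' i
      rw [← h, zero_mul] at this
      exact this
    · right
      refine ⟨s, h.le, s⁻¹ • x, (memA _).2 fun i => ?_, ?_⟩
      · rw [map_smul, smul_eq_mul, inv_mul_le_iff₀ h]
        exact hx' i
      · rw [smul_smul, mul_inv_cancel₀ h.ne', one_smul]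
  have hsup : (⋂ i, {x : X | Ti i x ≤ 0}) ⊆ closure (coneHull A) := by
    intro x hx
    have hl : Tendsto (fun t : ℝ => x + t • x0) (𝓝[>] 0) (𝓝 x) := by
      have : Continuous (fun t : ℝ => x + t • x0) := by fun_prop
      have := (this.tendsto 0).mono_left (nhdsWithin_le_nhds (s := Set.Ioi 0))
      simpa using this
    refine mem_closure_of_tendsto hl ?_
    filter_upwards [self_mem_nhdsWithin] with t ht
    have ht : 0 < t := ht
    refine ⟨t, ht.le, t⁻¹ • x + x0, (memA _).2 fun i => ?_, ?_⟩
    · have h1 : Ti i x ≤ 0 := Set.mem_iInter.1 hx i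
      have h2 : t⁻¹ * Ti i x ≤ 0 := mul_nonpos_of_nonneg_of_nonpos (inv_pos.2 ht).le h1
      rw [map_add, map_smul, smul_eq_mul]
      linarith
    · rw [smul_add, smul_smul, mul_inv_cancel₀ ht.ne', one_smul]
  refine ⟨hsub.antisymm (Set.union_subset hsup subset_closure), ?_, ?_⟩
  · intro x hx
    have hx := Submodule.mem_inf.1 hx
    refine ⟨hsup (Set.mem_iInter.2 fun i => ?_), hx.2⟩
    have : Ti i x = 0 := (Submodule.mem_iInf _).1 hx.1 i
    exact this.le
  · have hk : ((⨅ i, LinearMap.ker (Ti i : X →ₗ[ℝ] ℝ)) ⊓ LinearMap.ker (T : X →ₗ[ℝ] ℝ) :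
        Submodule ℝ X) = LinearMap.ker
          ((LinearMap.pi fun i => (Ti i : X →ₗ[ℝ] ℝ)).prod (T : X →ₗ[ℝ] ℝ)) := by
      rw [LinearMap.ker_prod, LinearMap.ker_pi]
    rw [hk]
    exact Module.Finite.equiv (LinearMap.quotKerEquivRange _).symm

end Paper
end
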